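/- For a singular core-labelled tree T, the columns of the CV × N(CV) biadjacency submatrix Q are linearly independent; equivalently η(T) = |CV| - |N(CV)|. -/

import Mathlib

open scoped Classical
open Matrix

/-- Nullity of a real square matrix: dimension of its kernel. -/
noncomputable def nullity {m : Type*} [Fintype m] (A : Matrix m m ℝ) : ℕ :=
  Module.finrank ℝ (LinearMap.ker A.mulVecLin)

variable {V : Type*} [Fintype V] [DecidableEq V]

/-- The set of core vertices of `G`: vertices in the support of some kernel vector. -/
def coreSet (G : SimpleGraph V) [DecidableRel G.Adj] : Set V :=
  {v | ∃ x : V → ℝ, (G.adjMatrix ℝ).mulVec x = 0 ∧ x v ≠ 0}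

/-- The neighbours of core vertices (which are core-forbidden when `coreSet` is
independent). -/
def nbhdSet (G : SimpleGraph V) [DecidableRel G.Adj] : Set V :=
  {v | v ∉ coreSet G ∧ ∃ u ∈ coreSet G, G.Adj u v}

/-- The remote core-forbidden vertices. -/
def remoteSet (G : SimpleGraph V) [DecidableRel G.Adj] : Set V :=
  {v | v ∉ coreSet G ∧ v ∉ nbhdSet G}

/-- The `CV × N(CV)` submatrix `Q` of the adjacency matrix. -/
noncomputable def Qmat (G : SimpleGraph V) [DecidableRel G.Adj] :
    Matrix (coreSet G) (nbhdSet G) ℝ :=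
  Matrix.of fun i j => (G.adjMatrix ℝ) i.val j.val

/-! Let `x` and `y` be vectors on the vertices of a finite forest with adjacency matrix `A`, such
that `A x` vanishes on the support of `y` and `A y` vanishes on the support of `x`. Then no edge
joins the two supports: at a leaf `v` of the forest formed by such edges, `(A x) v` or `(A y) v`
would reduce to a single nonzero term.

For kernel vectors `x`, `y` this says that the core vertices are independent. If `x` is a kernel
vector and `y`, supported on `N(CV)`, satisfies `Q y = 0`, it says that `y` vanishes next to the
support of `x`; hence `Q` has independent columns. Independence of the core moreover makes `ker A`
the extension by zero of `ker Qᵀ`, and rank-nullity for `Qᵀ` gives the nullity. -/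

section Submatrix

variable {R l k m n : Type*} [Fintype l] [Fintype n]

theorem mulVec_extend_zero [NonUnitalNonAssocSemiring R] (A : Matrix m n R) {e : l → n}
    (he : Function.Injective e) (g : l → R) :
    A *ᵥ Function.extend e g 0 = A.submatrix id e *ᵥ g := by
  funext i
  refine (Fintype.sum_of_injective e he _ _ (fun j hj => ?_) fun j => ?_).symm
  · rw [Function.extend_apply' _ _ _ hj, Pi.zero_apply, mul_zero]
  · rw [he.extend_apply]
    rfl

theorem extend_comp_of_support_subset_range {M ι κ : Type*} [Zero M] {e : ι → κ}
    (he : Function.Injective e) {x : κ → M} (hx : Function.support x ⊆ Set.range e) :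
    Function.extend e (x ∘ e) 0 = x := by
  funext j
  by_cases hj : j ∈ Set.range e
  · obtain ⟨j, rfl⟩ := hj
    exact he.extend_apply _ _ j
  · rw [Function.extend_apply' _ _ _ hj, Pi.zero_apply, Function.notMem_support.mp (mt (@hx j) hj)]

theorem map_extendByZero_ker_submatrix [CommSemiring R] (A : Matrix m n R) {e : l → n}
    (he : Function.Injective e) {f : k → m}
    (hker : ∀ x, A *ᵥ x = 0 → Function.support x ⊆ Set.range e)
    (hrow : ∀ i ∉ Set.range f, ∀ j, A i (e j) = 0) :
    (LinearMap.ker (A.submatrix f e).mulVecLin).map (Function.ExtendByZero.linearMap R e) =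
      LinearMap.ker A.mulVecLin := by
  have mem_ker_iff (g : l → R) : A.submatrix f e *ᵥ g = 0 ↔ A *ᵥ Function.extend e g 0 = 0 := by
    rw [mulVec_extend_zero A he]
    refine ⟨fun hg => funext fun i => ?_, fun hg => funext fun i => congrFun hg (f i)⟩
    by_cases hi : i ∈ Set.range f
    · obtain ⟨i, rfl⟩ := hi
      exact congrFun hg i
    · exact Finset.sum_eq_zero fun j _ => mul_eq_zero_of_left (hrow i hi j) (g j)
  ext x
  constructor
  · rintro ⟨g, hg, rfl⟩
    exact (mem_ker_iff g).mp hg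
  · intro hx
    have extend_restrict := extend_comp_of_support_subset_range he (hker x hx)
    refine ⟨x ∘ e, (mem_ker_iff _).mpr ?_, extend_restrict⟩
    rwa [extend_restrict]

end Submatrix

section Acyclic

variable {R W : Type*} {G : SimpleGraph W}

theorem exists_existsUnique_adj_of_isAcyclic [Finite G.edgeSet] (hG : G.IsAcyclic) (hne : G ≠ ⊥) :
    ∃ v, ∃! w, G.Adj v w := by
  obtain ⟨a, b, hab⟩ := SimpleGraph.ne_bot_iff_exists_adj.mp hne
  have : Nonempty W := ⟨a⟩
  obtain ⟨u, v, p, hp, hmax⟩ := SimpleGraph.Walk.exists_isPath_forall_isPath_length_le_length G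
  have p_not_nil : ¬ p.Nil := fun hnil => by
    have one_le_length : 1 ≤ p.length := hmax a b hab.toWalk hab.isPath_toWalk
    exact Nat.one_le_iff_ne_zero.mp one_le_length (SimpleGraph.Walk.length_eq_zero_iff.mpr hnil)
  refine ⟨u, p.snd, p.adj_snd p_not_nil, fun w huw => ?_⟩
  by_cases hw : w ∈ p.support
  · exact hG.eq_snd_of_adj_start hp huw hw
  · have longer := hmax w v (p.cons huw.symm) (hp.cons hw)
    exact absurd longer (Nat.not_succ_le_self _)

variable [Fintype W] [DecidableRel G.Adj]

theorem adjMatrix_mulVec_apply_eq_of_adj [NonAssocSemiring R] {x : W → R} {v w : W}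
    (hvw : G.Adj v w) (hw : ∀ u, G.Adj v u → x u ≠ 0 → u = w) :
    (G.adjMatrix R *ᵥ x) v = x w := by
  rw [SimpleGraph.adjMatrix_mulVec_apply]
  refine Finset.sum_eq_single_of_mem w ((G.mem_neighborFinset v w).mpr hvw) fun u hu huw => ?_
  by_contra hxu
  exact huw (hw u ((G.mem_neighborFinset v u).mp hu) hxu)

theorem not_adj_of_adjMatrix_mulVec_eq_zero_on_support [NonAssocSemiring R] (hG : G.IsAcyclic)
    {x y : W → R} (hx : ∀ v, y v ≠ 0 → (G.adjMatrix R *ᵥ x) v = 0)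
    (hy : ∀ v, x v ≠ 0 → (G.adjMatrix R *ᵥ y) v = 0) {a b : W} (ha : x a ≠ 0) (hb : y b ≠ 0) :
    ¬ G.Adj a b := by
  intro hab
  let H : SimpleGraph W := G ⊓ SimpleGraph.fromRel fun u v => x u ≠ 0 ∧ y v ≠ 0
  have adj_of_support {u v : W} (huv : G.Adj u v) (hu : x u ≠ 0) (hv : y v ≠ 0) : H.Adj u v :=
    ⟨huv, huv.ne, Or.inl ⟨hu, hv⟩⟩
  have H_ne_bot : H ≠ ⊥ :=
    SimpleGraph.ne_bot_iff_exists_adj.mpr ⟨a, b, adj_of_support hab ha hb⟩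
  obtain ⟨v, w, ⟨hvw, -, hsupp⟩, hunique⟩ :=
    exists_existsUnique_adj_of_isAcyclic (hG.anti inf_le_left) H_ne_bot
  rcases hsupp with ⟨hv, hw⟩ | ⟨hw, hv⟩
  · refine hw ((adjMatrix_mulVec_apply_eq_of_adj hvw fun u hvu hu => ?_).symm.trans (hy v hv))
    exact hunique u (adj_of_support hvu hv hu)
  · refine hw ((adjMatrix_mulVec_apply_eq_of_adj hvw fun u hvu hu => ?_).symm.trans (hx v hv))
    exact hunique u (adj_of_support hvu.symm hu hv).symm

theorem isIndepSet_coreSet (hG : G.IsAcyclic) : G.IsIndepSet (coreSet G) := by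
  rintro u ⟨x, hx, hxu⟩ v ⟨y, hy, hyv⟩ -
  exact not_adj_of_adjMatrix_mulVec_eq_zero_on_support hG (fun w _ => congrFun hx w)
    (fun w _ => congrFun hy w) hxu hyv

theorem linearIndependent_col_Qmat (hG : G.IsAcyclic) : LinearIndependent ℝ (Qmat G).col := by
  rw [← mulVec_injective_iff, ← coe_mulVecLin, ← LinearMap.ker_eq_bot, LinearMap.ker_eq_bot']
  intro g hg
  let y : W → ℝ := Function.extend Subtype.val g 0
  have adjMatrix_mulVec_y (u : W) (hu : u ∈ coreSet G) : (G.adjMatrix ℝ *ᵥ y) u = 0 := by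
    rw [mulVec_extend_zero _ Subtype.val_injective]
    exact congrFun hg ⟨u, hu⟩
  funext ⟨w, hw⟩
  by_contra hgw
  obtain ⟨u, ⟨x, hx, hxu⟩, huw⟩ := hw.2
  have hyw : y w ≠ 0 := by
    rwa [← Subtype.val_injective.extend_apply g 0 ⟨w, hw⟩] at hgw
  exact not_adj_of_adjMatrix_mulVec_eq_zero_on_support hG (fun v _ => congrFun hx v)
    (fun v hv => adjMatrix_mulVec_y v ⟨x, hx, hv⟩) hxu hyw huw

theorem nullity_adjMatrix_eq_finrank_ker_transpose_Qmat (hG : G.IsAcyclic) :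
    nullity (G.adjMatrix ℝ) = Module.finrank ℝ (LinearMap.ker (Qmat G)ᵀ.mulVecLin) := by
  have transpose_Qmat : (Qmat G)ᵀ = (G.adjMatrix ℝ).submatrix Subtype.val Subtype.val := by
    rw [← SimpleGraph.transpose_adjMatrix]
    rfl
  have support_subset (x : W → ℝ) (hx : G.adjMatrix ℝ *ᵥ x = 0) :
      Function.support x ⊆ Set.range (Subtype.val : coreSet G → W) :=
    fun v hv => ⟨⟨v, x, hx, hv⟩, rfl⟩
  have row_eq_zero (w : W) (hw : w ∉ Set.range (Subtype.val : nbhdSet G → W))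
      (u : coreSet G) : G.adjMatrix ℝ w u = 0 := by
    have not_adj : ¬ G.Adj w u := fun hwu =>
      hw ⟨⟨w, fun hcore => isIndepSet_coreSet hG hcore u.2 hwu.ne hwu, u, u.2, hwu.symm⟩, rfl⟩
    rw [SimpleGraph.adjMatrix_apply, if_neg not_adj]
  rw [nullity, transpose_Qmat, ← map_extendByZero_ker_submatrix _ Subtype.val_injective
    support_subset row_eq_zero]
  exact (Submodule.equivMapOfInjective _
    (Function.extend_injective Subtype.val_injective (0 : W → ℝ)) _).finrank_eq.symm

theorem stmt_19_general (hG : G.IsAcyclic) :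
    LinearIndependent ℝ (fun (j : nbhdSet G) => fun i => Qmat G i j)
      ∧ (nullity (G.adjMatrix ℝ) : ℤ)
          = (Fintype.card (coreSet G) : ℤ) - Fintype.card (nbhdSet G) := by
  have columns_independent := linearIndependent_col_Qmat hG
  refine ⟨columns_independent, ?_⟩
  have rank_transpose_Qmat : (Qmat G)ᵀ.rank = Fintype.card (nbhdSet G) :=
    LinearIndependent.rank_matrix (M := (Qmat G)ᵀ) columns_independent
  have rank_add_nullity : (Qmat G)ᵀ.rank + nullity (G.adjMatrix ℝ) = Fintype.card (coreSet G) := by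
    rw [nullity_adjMatrix_eq_finrank_ker_transpose_Qmat hG, Matrix.rank,
      LinearMap.finrank_range_add_finrank_ker, Module.finrank_fintype_fun_eq_card]
  omega

end Acyclic

/-- For a singular tree, the columns of the `CV × N(CV)` submatrix `Q` are linearly
independent; equivalently `η(T) = |CV| - |N(CV)|`. -/
theorem stmt_19 (T : SimpleGraph V) [DecidableRel T.Adj] (hT : T.IsTree)
    (hsing : ∃ x : V → ℝ, x ≠ 0 ∧ (T.adjMatrix ℝ).mulVec x = 0) :
    LinearIndependent ℝ (fun (j : nbhdSet T) => fun i => Qmat T i j)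
      ∧ (nullity (T.adjMatrix ℝ) : ℤ)
          = (Fintype.card (coreSet T) : ℤ) - Fintype.card (nbhdSet T) :=
  stmt_19_general hT.isAcyclic
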